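/- arXiv:1802.04856 — 2 statements merged into one kernel-verified Lean document; each statement's English description precedes it below -/
import Mathlib

section
/- In the quantum matrix bialgebra A(n; q), the quantum determinant det_q(x) = Σ_{v ∈ S_n} (-q^{-1/2})^{ℓ(v)} x_{v(1),1} ⋯ x_{v(n),n} is a central element: it commutes with every generator x_{i,j}. -/
noncomputable section

attribute [local instance] Classical.propDecidable

/-- The adjacent transposition `s_{i+1}` swapping `i` and `i+1` in `S_{n+1}`. -/
def adjT {n : ℕ} (i : Fin n) : Equiv.Perm (Fin (n + 1)) :=
  Equiv.swap i.castSucc i.succ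

/-- Coxeter length: minimal number of adjacent transpositions whose product is `w`. -/
def len {m : ℕ} (w : Equiv.Perm (Fin m)) : ℕ :=
  sInf {k | ∃ l : List (Equiv.Perm (Fin m)), l.length = k ∧
    (∀ s ∈ l, ∃ p : Fin m × Fin m, (p.1 : ℕ) + 1 = (p.2 : ℕ) ∧ s = Equiv.swap p.1 p.2) ∧
    l.prod = w}

/-- Product of the word of generators given by a list of indices. -/
def wordProd {n : ℕ} (l : List (Fin n)) : Equiv.Perm (Fin (n + 1)) :=
  (l.map adjT).prod

/-- `l` is a reduced word for `w`. -/
def IsRedWord {n : ℕ} (l : List (Fin n)) (w : Equiv.Perm (Fin (n + 1))) : Prop :=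
  wordProd l = w ∧ l.length = len w

/-- Bruhat order. -/
def BruhatLE {n : ℕ} (u v : Equiv.Perm (Fin (n + 1))) : Prop :=
  ∀ l : List (Fin n), IsRedWord l v → ∃ l' : List (Fin n), l'.Sublist l ∧ IsRedWord l' u

/-- Left weak order. -/
def WeakLE {n : ℕ} (t u : Equiv.Perm (Fin (n + 1))) : Prop :=
  len u = len (u * t⁻¹) + len t

/-- The base ring `ℤ[q^{1/2}, q^{-1/2}]`, with `T 1 = q^{1/2}`. -/
abbrev A := LaurentPolynomial ℤ

def qh : A := LaurentPolynomial.T 1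
def qhi : A := LaurentPolynomial.T (-1)
def qq : A := LaurentPolynomial.T 2

/-- Relations of the quantum matrix bialgebra `A(m;q)`. -/
inductive QRel (m : ℕ) : FreeAlgebra A (Fin m × Fin m) → FreeAlgebra A (Fin m × Fin m) → Prop
  | r1 (i k l : Fin m) (h : k < l) :
      QRel m (FreeAlgebra.ι A (i, l) * FreeAlgebra.ι A (i, k))
        (algebraMap A _ qh * (FreeAlgebra.ι A (i, k) * FreeAlgebra.ι A (i, l)))
  | r2 (i j k : Fin m) (h : i < j) :
      QRel m (FreeAlgebra.ι A (j, k) * FreeAlgebra.ι A (i, k))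
        (algebraMap A _ qh * (FreeAlgebra.ι A (i, k) * FreeAlgebra.ι A (j, k)))
  | r3 (i j k l : Fin m) (hij : i < j) (hkl : k < l) :
      QRel m (FreeAlgebra.ι A (j, k) * FreeAlgebra.ι A (i, l))
        (FreeAlgebra.ι A (i, l) * FreeAlgebra.ι A (j, k))
  | r4 (i j k l : Fin m) (hij : i < j) (hkl : k < l) :
      QRel m (FreeAlgebra.ι A (j, l) * FreeAlgebra.ι A (i, k))
        (FreeAlgebra.ι A (i, k) * FreeAlgebra.ι A (j, l) +
          algebraMap A _ (qh - qhi) * (FreeAlgebra.ι A (i, l) * FreeAlgebra.ι A (j, k)))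

/-- The quantum matrix bialgebra `A(m;q)`. -/
abbrev Qmb (m : ℕ) := RingQuot (QRel m)

/-- The generator `x_{i,j}` of the quantum matrix bialgebra. -/
def Xg {m : ℕ} (i j : Fin m) : Qmb m :=
  RingQuot.mkAlgHom A (QRel m) (FreeAlgebra.ι A (i, j))

/-- The zero-weight-space monomial `x^{u,v} = x_{u(1),v(1)} ⋯ x_{u(m),v(m)}`. -/
def xm {m : ℕ} (u v : Equiv.Perm (Fin m)) : Qmb m :=
  (List.ofFn fun k : Fin m => Xg (u k) (v k)).prod

/-- The quantum determinant `det_q(x) = Σ_v (-q^{-1/2})^{ℓ(v)} x_{v(1),1}⋯x_{v(m),m}`. -/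
def qdet (m : ℕ) : Qmb m :=
  ∑ v : Equiv.Perm (Fin m),
    ((-qhi) ^ len v) • (List.ofFn fun k : Fin m => Xg (v k) k).prod


open Finset in
/-- Number of inversions of a word. -/
def invs {n m : ℕ} (f : Fin n → Fin m) : ℕ :=
  (univ.filter fun p : Fin n × Fin n => p.1 < p.2 ∧ f p.2 < f p.1).card

/-- adjacent transposition -/
abbrev sw {n : ℕ} (k : Fin n) : Equiv.Perm (Fin (n + 1)) := Equiv.swap k.castSucc k.succ

lemma invs_sw {n m : ℕ} (f : Fin (n+1) → Fin m) (k : Fin n) (h : f k.castSucc < f k.succ) :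
    invs (f ∘ sw k) = invs f + 1 := by
  classical
  unfold invs
  have hne : k.castSucc ≠ k.succ := (Fin.castSucc_lt_succ).ne
  have key : ∀ a b : Fin (n+1), (a, b) ≠ (k.castSucc, k.succ) → (a,b) ≠ (k.succ, k.castSucc) →
      (sw k a < sw k b ↔ a < b) := by
    intro a b h1 h2
    simp only [ne_eq, Prod.mk.injEq, not_and, Fin.ext_iff, Fin.val_castSucc, Fin.val_succ] at h1 h2
    simp only [sw, Equiv.swap_apply_def, Fin.lt_def, Fin.ext_iff, Fin.val_castSucc, Fin.val_succ]
    split_ifs <;> simp only [Fin.val_castSucc, Fin.val_succ] <;> omega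
  have : (Finset.univ.filter fun p : Fin (n+1) × Fin (n+1) =>
        p.1 < p.2 ∧ (f ∘ sw k) p.2 < (f ∘ sw k) p.1) =
      insert (k.castSucc, k.succ) ((Finset.univ.filter fun p : Fin (n+1) × Fin (n+1) =>
        p.1 < p.2 ∧ f p.2 < f p.1).map (Equiv.prodCongr (sw k) (sw k)).toEmbedding) := by
    ext ⟨a, b⟩
    simp only [Finset.mem_filter, Finset.mem_univ, true_and, Finset.mem_insert,
      Finset.mem_map_equiv, Function.comp]
    have e : (Equiv.prodCongr (sw k) (sw k)).symm (a, b) = (sw k a, sw k b) := by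
      simp [Equiv.prodCongr_symm]
    rw [e]
    by_cases h1 : (a, b) = (k.castSucc, k.succ)
    · simp only [Prod.mk.injEq] at h1
      obtain ⟨rfl, rfl⟩ := h1
      simp [h]
    by_cases h2 : (a, b) = (k.succ, k.castSucc)
    · simp only [Prod.mk.injEq] at h2
      obtain ⟨rfl, rfl⟩ := h2
      have : ¬ (k.succ < k.castSucc) := not_lt.mpr (Fin.castSucc_lt_succ).le
      simp [this, hne.symm, h.le]
    · simp [h1, key a b h1 h2]
  rw [this, Finset.card_insert_of_notMem, Finset.card_map]
  have e : (Equiv.prodCongr (sw k) (sw k)).symm (k.castSucc, k.succ) = (k.succ, k.castSucc) := by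
    simp [Equiv.prodCongr_symm]
  simp only [Finset.mem_map_equiv, e, Finset.mem_filter]
  have : ¬ (k.succ < k.castSucc) := not_lt.mpr (Fin.castSucc_lt_succ).le
  simp [this]

lemma comp_sw_sw {n m : ℕ} (f : Fin (n+1) → Fin m) (k : Fin n) : (f ∘ sw k) ∘ sw k = f := by
  ext a; simp

lemma invs_sw' {n m : ℕ} (f : Fin (n+1) → Fin m) (k : Fin n) (h : f k.succ < f k.castSucc) :
    invs f = invs (f ∘ sw k) + 1 := by
  rw [← invs_sw (f ∘ sw k) k (by simpa using h), comp_sw_sw]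

lemma strictMono_self_id {m : ℕ} (f : Fin m → Fin m) (h : StrictMono f) : f = id := by
  have h2 : Function.Bijective f := Finite.injective_iff_bijective.mp h.injective
  have := Subsingleton.elim (h.orderIsoOfSurjective f h2.2) (OrderIso.refl _)
  ext a
  have := congrArg (fun g => (g a : Fin m)) this
  simpa using congrArg Fin.val this

lemma invs_id {m : ℕ} : invs (id : Fin m → Fin m) = 0 := by
  unfold invs
  rw [Finset.card_eq_zero, Finset.filter_eq_empty_iff]
  rintro ⟨a, b⟩ _ ⟨h1, h2⟩
  exact lt_asymm h1 h2

lemma exists_word {n : ℕ} (w : Equiv.Perm (Fin (n+1))) :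
    ∃ l : List (Equiv.Perm (Fin (n+1))), l.length = invs w ∧
    (∀ s ∈ l, ∃ p : Fin (n+1) × Fin (n+1), (p.1 : ℕ) + 1 = (p.2 : ℕ) ∧ s = Equiv.swap p.1 p.2) ∧
    l.prod = w := by
  generalize hN : invs w = N
  induction N generalizing w with
  | zero =>
    refine ⟨[], rfl, by simp, ?_⟩
    have hs : StrictMono w := by
      rw [Fin.strictMono_iff_lt_succ]
      intro k
      by_contra hk
      have hlt : w k.succ < w k.castSucc := lt_of_le_of_ne (not_lt.mp hk)
        (fun h => (Fin.castSucc_lt_succ (i := k)).ne' (w.injective h))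
      have := invs_sw' w k hlt
      omega
    have := strictMono_self_id _ hs
    ext a
    simp [this]
  | succ N ih =>
    have hs : ¬ StrictMono w := by
      intro h
      rw [strictMono_self_id _ h, invs_id] at hN
      omega
    rw [Fin.strictMono_iff_lt_succ] at hs
    push Not at hs
    obtain ⟨k, hk⟩ := hs
    have hlt : w k.succ < w k.castSucc := lt_of_le_of_ne hk
        (fun h => (Fin.castSucc_lt_succ (i := k)).ne' (w.injective h))
    have := invs_sw' w k hlt
    obtain ⟨l, h1, h2, h3⟩ := ih (w * sw k) (by rw [Equiv.Perm.coe_mul]; omega)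
    refine ⟨l ++ [sw k], by simp [h1], ?_, by simp [h3, mul_assoc]⟩
    intro s hs
    rw [List.mem_append] at hs
    rcases hs with hs | hs
    · exact h2 s hs
    · exact ⟨(k.castSucc, k.succ), by simp, by simpa using hs⟩

lemma invs_le_word {n : ℕ} (l : List (Equiv.Perm (Fin (n+1))))
    (hl : ∀ s ∈ l, ∃ p : Fin (n+1) × Fin (n+1), (p.1 : ℕ) + 1 = (p.2 : ℕ) ∧
      s = Equiv.swap p.1 p.2) : invs (l.prod : Equiv.Perm (Fin (n+1))) ≤ l.length := by
  induction l using List.reverseRecOn with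
  | nil => simp [invs_id]
  | append_singleton l s ih =>
    have ih := ih (fun t ht => hl t (by simp [ht]))
    obtain ⟨⟨a, b⟩, h1, h2⟩ := hl s (by simp)
    simp only at h1 h2
    obtain ⟨k, rfl, rfl⟩ : ∃ k : Fin n, a = k.castSucc ∧ b = k.succ :=
      ⟨⟨a, by omega⟩, by ext; simp, by ext; simp [h1]⟩
    subst h2
    rw [List.prod_append, List.prod_singleton, List.length_append, List.length_singleton,
      Equiv.Perm.coe_mul]
    change invs (l.prod ∘ sw k) ≤ _
    rcases lt_trichotomy (l.prod k.castSucc) (l.prod k.succ) with h | h | h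
    · have := invs_sw l.prod k h
      omega
    · exact absurd (l.prod.injective h) (Fin.castSucc_lt_succ).ne
    · have := invs_sw' l.prod k h
      omega

lemma len_eq_invs {n : ℕ} (w : Equiv.Perm (Fin (n+1))) : len w = invs w := by
  apply le_antisymm
  · exact Nat.sInf_le (exists_word w)
  · obtain ⟨l, h1, h2, h3⟩ := Nat.sInf_mem (s := {k | ∃ l : List (Equiv.Perm (Fin (n+1))),
      l.length = k ∧ (∀ s ∈ l, ∃ p : Fin (n+1) × Fin (n+1), (p.1 : ℕ) + 1 = (p.2 : ℕ) ∧
        s = Equiv.swap p.1 p.2) ∧ l.prod = w}) ⟨_, exists_word w⟩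
    have := invs_le_word l h2
    rw [h3, h1] at this
    exact this

lemma qh_mul_qhi : qh * qhi = 1 := by
  rw [qh, qhi, ← LaurentPolynomial.T_add, ← LaurentPolynomial.T_zero]
  rfl

/-- weight of a word -/
def om {n m : ℕ} (f : Fin n → Fin m) : A :=
  if Function.Injective f then (-qhi) ^ invs f else 0

lemma om_id {m : ℕ} : om (id : Fin m → Fin m) = 1 := by
  simp [om, invs_id, Function.injective_id]

lemma inj_sw {n m : ℕ} (f : Fin (n+1) → Fin m) (k : Fin n) :
    Function.Injective (f ∘ sw k) ↔ Function.Injective f :=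
  Function.Injective.of_comp_iff' f (sw k).bijective

lemma om_sw {n m : ℕ} (f : Fin (n+1) → Fin m) (k : Fin n) (h : f k.castSucc < f k.succ) :
    om (f ∘ sw k) = -qhi * om f := by
  unfold om
  simp only [invs_sw f k h, inj_sw]
  split_ifs
  · ring
  · simp

lemma om_eq {n m : ℕ} (f : Fin (n+1) → Fin m) (k : Fin n) (h : f k.castSucc = f k.succ) :
    om f = 0 := by
  unfold om
  rw [if_neg]
  intro hf
  exact (Fin.castSucc_lt_succ).ne (hf h)

/-- R-matrix entries -/
def th {m : ℕ} (a b : Fin m) : A :=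
  if b < a then qh - qhi else if a = b then qh - 1 else 0

/-- R-matrix action on functions of words -/
def RR {n m : ℕ} {M : Type*} [AddCommGroup M] [Module A M] (k : Fin n)
    (c : (Fin (n+1) → Fin m) → M) : (Fin (n+1) → Fin m) → M :=
  fun w => c (w ∘ sw k) + th (w k.castSucc) (w k.succ) • c w

lemma om_RR {n m : ℕ} (k : Fin n) (f : Fin (n+1) → Fin m) :
    om (f ∘ sw k) + th (f k.castSucc) (f k.succ) * om f = -qhi * om f := by
  rcases lt_trichotomy (f k.castSucc) (f k.succ) with h | h | h
  · rw [om_sw f k h, th, if_neg h.not_gt, if_neg h.ne]; ring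
  · have e : om f = 0 := om_eq f k h
    have e' : om (f ∘ sw k) = 0 := om_eq (f ∘ sw k) k (by simp [h])
    rw [e, e']; ring
  · have := om_sw (f ∘ sw k) k (by simpa using h)
    rw [comp_sw_sw] at this
    rw [th, if_pos h, this]
    linear_combination (-om (f ∘ sw k)) * qh_mul_qhi

/-- uniqueness of antisymmetric functions -/
lemma antisymm_unique {n : ℕ} {M : Type*} [AddCommGroup M] [Module A M]
    (c : (Fin (n+1) → Fin (n+1)) → M)
    (h1 : ∀ f (k : Fin n), f k.castSucc = f k.succ → c f = 0)
    (h2 : ∀ f (k : Fin n), f k.castSucc < f k.succ → c (f ∘ sw k) = (-qhi) • c f)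
    (f : Fin (n+1) → Fin (n+1)) : c f = om f • c id := by
  generalize hN : invs f = N
  induction N using Nat.strong_induction_on generalizing f with
  | _ N ih =>
    by_cases hs : StrictMono f
    · rw [strictMono_self_id f hs, om_id, one_smul]
    · rw [Fin.strictMono_iff_lt_succ] at hs
      push Not at hs
      obtain ⟨k, hk⟩ := hs
      rcases hk.lt_or_eq with hk | hk
      · have hlt : (f ∘ sw k) k.castSucc < (f ∘ sw k) k.succ := by simpa using hk
        have e1 := h2 (f ∘ sw k) k hlt
        have e2 := om_sw (f ∘ sw k) k hlt
        rw [comp_sw_sw] at e1 e2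
        have := invs_sw' f k hk
        rw [e1, e2, ih _ (by omega) (f ∘ sw k) rfl, mul_smul]
      · rw [h1 f k hk.symm, om_eq f k hk.symm, zero_smul]

lemma RR_antisymm {n m : ℕ} (k : Fin n)
    (c : (Fin (n+1) → Fin m) → A) (h : RR k c = (-qhi) • c) (f : Fin (n+1) → Fin m) :
    (f k.castSucc = f k.succ → c f = 0) ∧
    (f k.castSucc < f k.succ → c (f ∘ sw k) = (-qhi) • c f) := by
  have h := congrFun h f
  simp only [RR, Pi.smul_apply, smul_eq_mul] at h ⊢
  constructor
  · intro hk
    have e : f ∘ sw k = f := by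
      ext a
      simp only [Function.comp, sw, Equiv.swap_apply_def]
      split_ifs <;> simp_all
    rw [e, th, if_neg (by simp [hk]), if_pos hk] at h
    have h' : (qh ^ 2 + 1) * c f = 0 := by
      linear_combination qh * h - c f * qh_mul_qhi
    rcases mul_eq_zero.mp h' with h0 | h0
    · exfalso
      have h3 : (LaurentPolynomial.T 2 + LaurentPolynomial.T 0 : LaurentPolynomial ℤ) = 0 := by
        rw [← h0, qh, LaurentPolynomial.T_pow]; simp
      have h4 := congrArg (fun p : LaurentPolynomial ℤ => LaurentPolynomial.eval₂ (RingHom.id ℤ) (1 : ℤˣ) p) h3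
      simp at h4
    · exact h0
  · intro hk
    rw [th, if_neg hk.not_gt, if_neg hk.ne, zero_mul, add_zero] at h
    exact h

lemma RR_smul {n m : ℕ} {M : Type*} [AddCommGroup M] [Module A M] (k : Fin n) (a : A)
    (c : (Fin (n+1) → Fin m) → M) : RR k (a • c) = a • RR k c := by
  ext w
  simp only [RR, Pi.smul_apply, smul_add, smul_comm a]

lemma RR_comm {n m : ℕ} {M : Type*} [AddCommGroup M] [Module A M] (k l : Fin n)
    (hkl : (k : ℕ) + 2 ≤ l)
    (c : (Fin (n+1) → Fin m) → M) : RR k (RR l c) = RR l (RR k c) := by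
  funext w
  have d1 : l.castSucc ≠ k.castSucc := by simp [Fin.ext_iff]; omega
  have d2 : l.castSucc ≠ k.succ := by simp [Fin.ext_iff]; omega
  have d3 : l.succ ≠ k.castSucc := by simp [Fin.ext_iff]; omega
  have d4 : l.succ ≠ k.succ := by simp [Fin.ext_iff]; omega
  have e : (w ∘ sw k) ∘ sw l = (w ∘ sw l) ∘ sw k := by
    ext a
    simp only [Function.comp, sw]
    congr 2
    have := Equiv.Perm.Disjoint.commute (Equiv.Perm.disjoint_swap_swap (x := k.castSucc) (y := k.succ) (z := l.castSucc) (t := l.succ) (by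
        have := (Fin.castSucc_lt_succ (i := k)).ne
        have := (Fin.castSucc_lt_succ (i := l)).ne
        simp; grind))
    exact congrArg (fun g => g a) this
  simp only [RR, e]
  simp only [Function.comp, sw, Equiv.swap_apply_of_ne_of_ne d1 d2, Equiv.swap_apply_of_ne_of_ne d3 d4,
    Equiv.swap_apply_of_ne_of_ne d1.symm d3.symm, Equiv.swap_apply_of_ne_of_ne d2.symm d4.symm]
  module

lemma RR_braid {n m : ℕ} (k l : Fin n) (hkl : (k : ℕ) + 1 = l)
    (c : (Fin (n+1) → Fin m) → A) : RR k (RR l (RR k c)) = RR l (RR k (RR l c)) := by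
  funext w
  have hc : l.castSucc = k.succ := by simp [Fin.ext_iff]; omega
  have d1 : k.castSucc ≠ k.succ := by simp [Fin.ext_iff]
  have d2 : l.succ ≠ k.castSucc := by simp [Fin.ext_iff]; omega
  have d3 : l.succ ≠ k.succ := by simp [Fin.ext_iff]; omega
  simp only [RR, sw, hc, smul_eq_mul]
  generalize k.castSucc = x at *
  generalize k.succ = y at *
  generalize l.succ = z at *
  have eb : ((w ∘ Equiv.swap x y) ∘ Equiv.swap y z) ∘ Equiv.swap x y =
      ((w ∘ Equiv.swap y z) ∘ Equiv.swap x y) ∘ Equiv.swap y z := by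
    ext a
    simp only [Function.comp, Equiv.swap_apply_def]
    grind
  have e1 : (w ∘ Equiv.swap x y) ∘ Equiv.swap x y = w := by ext a; simp
  have e2 : (w ∘ Equiv.swap y z) ∘ Equiv.swap y z = w := by ext a; simp
  rw [eb]
  simp only [e1, e2]
  simp only [Function.comp, Equiv.swap_apply_left, Equiv.swap_apply_right,
    Equiv.swap_apply_of_ne_of_ne d2 d3, Equiv.swap_apply_of_ne_of_ne d1 d2.symm]
  have f1 : w x = w y → w ∘ Equiv.swap x y = w := by
    intro h; ext a
    simp only [Function.comp, Equiv.swap_apply_def]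
    grind
  have f2 : w y = w z → w ∘ Equiv.swap y z = w := by
    intro h; ext a
    simp only [Function.comp, Equiv.swap_apply_def]
    grind
  have f3 : w x = w z → (w ∘ Equiv.swap x y) ∘ Equiv.swap y z = w ∘ Equiv.swap x y := by
    intro h; ext a
    simp only [Function.comp, Equiv.swap_apply_def]
    grind
  have f4 : w x = w z → (w ∘ Equiv.swap y z) ∘ Equiv.swap x y = w ∘ Equiv.swap y z := by
    intro h; ext a
    simp only [Function.comp, Equiv.swap_apply_def]
    grind
  have g1 : w x = w y → c (w ∘ Equiv.swap x y) = c w ∧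
      c ((w ∘ Equiv.swap x y) ∘ Equiv.swap y z) = c (w ∘ Equiv.swap y z) ∧
      c (((w ∘ Equiv.swap y z) ∘ Equiv.swap x y) ∘ Equiv.swap y z) =
        c ((w ∘ Equiv.swap y z) ∘ Equiv.swap x y) := by
    intro h; rw [← eb, f1 h]; simp
  have g2 : w y = w z → c (w ∘ Equiv.swap y z) = c w ∧
      c ((w ∘ Equiv.swap y z) ∘ Equiv.swap x y) = c (w ∘ Equiv.swap x y) ∧
      c (((w ∘ Equiv.swap y z) ∘ Equiv.swap x y) ∘ Equiv.swap y z) =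
        c ((w ∘ Equiv.swap x y) ∘ Equiv.swap y z) := by
    intro h; rw [f2 h]; simp
  have g3 : w x = w z → c ((w ∘ Equiv.swap x y) ∘ Equiv.swap y z) = c (w ∘ Equiv.swap x y) ∧
      c ((w ∘ Equiv.swap y z) ∘ Equiv.swap x y) = c (w ∘ Equiv.swap y z) ∧
      c (((w ∘ Equiv.swap y z) ∘ Equiv.swap x y) ∘ Equiv.swap y z) = c w := by
    intro h; rw [f3 h, f4 h, e2]; simp
  clear f1 f2 f3 f4 e1 e2 eb
  have hq := qh_mul_qhi
  generalize c (((w ∘ Equiv.swap y z) ∘ Equiv.swap x y) ∘ Equiv.swap y z) = c5 at *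
  generalize c ((w ∘ Equiv.swap y z) ∘ Equiv.swap x y) = c4 at *
  generalize c ((w ∘ Equiv.swap x y) ∘ Equiv.swap y z) = c3 at *
  generalize c (w ∘ Equiv.swap y z) = c2 at *
  generalize c (w ∘ Equiv.swap x y) = c1 at *
  generalize c w = c0 at *
  generalize w x = a at *
  generalize w y = b at *
  generalize w z = d at *
  rcases lt_trichotomy a b with h1 | h1 | h1 <;>
  rcases lt_trichotomy b d with h2 | h2 | h2 <;>
  rcases lt_trichotomy a d with h3 | h3 | h3 <;>
  first
  | (exfalso; omega)
  | (simp only [th, h1, h2, h3, h1.not_gt, h2.not_gt, h3.not_gt, h1.ne, h2.ne, h3.ne, h1.ne', h2.ne', h3.ne', if_true, if_false]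
     ring1)
  | skip
  · obtain ⟨rfl, rfl, rfl⟩ := g2 h2
    subst h2
    simp only [th, h1, h3, h1.not_gt, h1.ne, h1.ne', if_true, if_false, lt_irrefl]
    ring1
  · obtain ⟨rfl, rfl, rfl⟩ := g3 h3
    subst h3
    simp only [th, h1, h2, h1.not_gt, h1.ne, h1.ne', if_true, if_false, lt_irrefl]
    ring1
  · obtain ⟨rfl, rfl, rfl⟩ := g1 h1
    subst h1
    simp only [th, h3, h2, h2.not_gt, h2.ne, h2.ne', if_true, if_false, lt_irrefl]
    ring1
  · obtain ⟨rfl, rfl, rfl⟩ := g1 h1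
    obtain ⟨rfl, rfl, -⟩ := g2 h2
    subst h1 h2
    ring1
  · obtain ⟨rfl, rfl, rfl⟩ := g1 h1
    subst h1
    simp only [th, h3, h2, h2.not_gt, h2.ne, h2.ne', if_true, if_false, lt_irrefl]
    linear_combination (qh - qhi) * c1 * hq
  · obtain ⟨rfl, rfl, rfl⟩ := g3 h3
    subst h3
    simp only [th, h1, h2, h1.not_gt, h1.ne, h1.ne', if_true, if_false, lt_irrefl]
    ring1
  · obtain ⟨rfl, rfl, rfl⟩ := g2 h2
    subst h2
    simp only [th, h1, h3, h1.not_gt, h1.ne, h1.ne', if_true, if_false, lt_irrefl]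
    linear_combination (qhi - qh) * c2 * hq

/-- successive application of the R-matrices -/
def itR {n m : ℕ} {M : Type*} [AddCommGroup M] [Module A M]
    (c : (Fin (n+1) → Fin m) → M) (p : Fin (n+1)) : (Fin (n+1) → Fin m) → M :=
  Fin.induction (motive := fun _ => (Fin (n+1) → Fin m) → M) c (fun k d => RR k d) p

lemma itR_zero {n m : ℕ} {M : Type*} [AddCommGroup M] [Module A M]
    (c : (Fin (n+1) → Fin m) → M) : itR c 0 = c := rfl

lemma itR_succ {n m : ℕ} {M : Type*} [AddCommGroup M] [Module A M]
    (c : (Fin (n+1) → Fin m) → M) (k : Fin n) : itR c k.succ = RR k (itR c k.castSucc) := rfl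

lemma itR_anti {n m : ℕ} (c : (Fin (n+1) → Fin m) → A)
    (hc : ∀ k : Fin n, 0 < (k : ℕ) → RR k c = (-qhi) • c) (N : ℕ) :
    ∀ p : Fin (n+1), (p : ℕ) = N → ∀ k : Fin n, ((k : ℕ) + 2 ≤ p ∨ (p : ℕ) < k) →
      RR k (itR c p) = (-qhi) • itR c p := by
  induction N using Nat.strong_induction_on with
  | _ N ih =>
    intro p hp k hk
    induction p using Fin.cases with
    | zero => exact hc k (by simpa using hk)
    | succ p =>
      simp only [Fin.val_succ] at hp hk
      rw [itR_succ]
      rcases hk with hk | hk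
      · by_cases h : (k : ℕ) + 2 ≤ p
        · rw [RR_comm k p h, ih p (by omega) p.castSucc rfl k (Or.inl (by simpa using h)), RR_smul]
        · have hkp : (k : ℕ) + 1 = p := by omega
          have e : p.castSucc = k.succ := by ext; simp [hkp]
          rw [e, itR_succ, RR_braid k p hkp,
            ih k (by omega) k.castSucc rfl p (Or.inr (by simp; omega)), RR_smul, RR_smul]
      · rw [← RR_comm p k (by omega), ih p (by omega) p.castSucc rfl k (Or.inr (by simp; omega)),
          RR_smul]

/-- the covector `e_i ⊗ ω` -/
def c0 {n : ℕ} (i : Fin (n+1)) (w : Fin (n+2) → Fin (n+1)) : A :=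
  if w 0 = i then om (w ∘ Fin.succ) else 0

lemma comp_sw_succ {n m : ℕ} (w : Fin (n+2) → Fin m) (k : Fin n) :
    (w ∘ sw k.succ) ∘ Fin.succ = (w ∘ Fin.succ) ∘ sw k := by
  funext a
  simp only [Function.comp, sw, Equiv.swap_apply_def, Fin.ext_iff, Fin.val_succ, Fin.val_castSucc]
  congr 1
  split_ifs <;> first | rfl | (exfalso; omega)

lemma comp_sw_castSucc {n m : ℕ} (w : Fin (n+2) → Fin m) (k : Fin n) :
    (w ∘ sw k.castSucc) ∘ Fin.castSucc = (w ∘ Fin.castSucc) ∘ sw k := by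
  funext a
  simp only [Function.comp, sw, Equiv.swap_apply_def, Fin.ext_iff, Fin.val_succ, Fin.val_castSucc]
  congr 1
  split_ifs <;> first | rfl | (exfalso; omega)

lemma c0_anti {n : ℕ} (i : Fin (n+1)) (k : Fin (n+1)) (hk : 0 < (k : ℕ)) :
    RR k (c0 i) = (-qhi) • c0 i := by
  funext w
  obtain ⟨l, rfl⟩ := Fin.exists_succ_eq.mpr (show k ≠ 0 by rintro rfl; simp at hk)
  have h0 : (w ∘ sw l.succ) 0 = w 0 := by
    simp only [Function.comp, sw]
    rw [Equiv.swap_apply_of_ne_of_ne] <;> simp [Fin.ext_iff]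
  simp only [RR, c0, h0, comp_sw_succ, Pi.smul_apply, smul_eq_mul]
  split_ifs
  · exact om_RR l (w ∘ Fin.succ)
  · simp

lemma et_twice {n : ℕ} (i : Fin (n+1)) (p : Fin (n+2)) : ∀ w : Fin (n+2) → Fin (n+1),
    (∃ a b, a ≠ b ∧ w a = w b ∧ w a ≠ i) → itR (c0 i) p w = 0 := by
  induction p using Fin.induction with
  | zero =>
    rintro w ⟨a, b, hab, h1, h2⟩
    rw [itR_zero, c0]
    split_ifs with h
    · rw [om, if_neg]
      intro hi
      have ha : a ≠ 0 := by rintro rfl; exact h2 h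
      have hb : b ≠ 0 := by rintro rfl; exact h2 (h1.trans h)
      obtain ⟨a, rfl⟩ := Fin.exists_succ_eq.mpr ha
      obtain ⟨b, rfl⟩ := Fin.exists_succ_eq.mpr hb
      exact hab (congrArg Fin.succ (hi h1))
    · rfl
  | succ k ih =>
    rintro w ⟨a, b, hab, h1, h2⟩
    rw [itR_succ, RR, ih w ⟨a, b, hab, h1, h2⟩, ih (w ∘ sw k) ⟨sw k a, sw k b, by simpa using hab,
      by simpa using h1, by simpa using h2⟩]
    simp

lemma et_gt {n : ℕ} (i : Fin (n+1)) (p : Fin (n+2)) : ∀ w : Fin (n+2) → Fin (n+1),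
    i < w p → itR (c0 i) p w = 0 := by
  induction p using Fin.induction with
  | zero =>
    intro w h
    rw [itR_zero, c0, if_neg h.ne']
  | succ k ih =>
    intro w h
    rw [itR_succ, RR, ih (w ∘ sw k) (by simpa using h), zero_add]
    by_cases h' : w k.succ ≤ w k.castSucc
    · rw [ih w (h.trans_le h'), smul_zero]
    · rw [th, if_neg (fun h2 => h' h2.le), if_neg (fun h2 => h' h2.ge), zero_smul]

lemma et_eq {n : ℕ} (i : Fin (n+1)) (p : Fin (n+2)) : ∀ w : Fin (n+2) → Fin (n+1),
    w p = i → itR (c0 i) p w =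
      (∏ a ∈ Finset.Iio p, if w a = i then qh else 1) * om (w ∘ p.succAbove) := by
  induction p using Fin.induction with
  | zero =>
    intro w h
    have : Finset.Iio (0 : Fin (n+2)) = ∅ := by ext; simp
    rw [itR_zero, c0, if_pos h, this, Finset.prod_empty, one_mul]
    rfl
  | succ k ih =>
    intro w h
    have e1 := ih (w ∘ sw k) (by simpa using h)
    have e2 : (w ∘ sw k) ∘ k.castSucc.succAbove = w ∘ k.succ.succAbove := by
      funext a
      simp only [Function.comp, sw]
      congr 1
      simp only [Fin.succAbove, Equiv.swap_apply_def, Fin.ext_iff, Fin.lt_def]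
      split_ifs <;> simp_all <;> omega
    have e3 : (∏ a ∈ Finset.Iio k.castSucc, if (w ∘ sw k) a = i then qh else 1) =
        ∏ a ∈ Finset.Iio k.castSucc, if w a = i then qh else 1 := by
      apply Finset.prod_congr rfl
      intro a ha
      rw [Finset.mem_Iio] at ha
      simp only [Function.comp, sw]
      simp only [Equiv.swap_apply_of_ne_of_ne ha.ne (ha.trans Fin.castSucc_lt_succ).ne]
    have e4 : Finset.Iio k.succ = insert k.castSucc (Finset.Iio k.castSucc) := by
      ext a
      simp only [Finset.mem_Iio, Finset.mem_insert, Fin.lt_def, Fin.ext_iff, Fin.val_succ,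
        Fin.val_castSucc]
      omega
    rw [itR_succ, RR, e1, e2, e3, e4, Finset.prod_insert (by simp)]
    rcases lt_trichotomy (w k.castSucc) (w k.succ) with h1 | h1 | h1
    · rw [th, if_neg h1.not_gt, if_neg h1.ne, if_neg (h ▸ h1.ne)]
      simp
    · have e : w ∘ sw k = w := by
        funext a
        simp only [Function.comp, sw, Equiv.swap_apply_def]
        split_ifs <;> simp_all
      rw [e2, e3, e] at e1
      rw [th, if_neg (by simp [h1]), if_pos h1, if_pos (h1.trans h), e1, smul_eq_mul]
      ring
    · rw [et_gt i _ w (h ▸ h1), if_neg (h ▸ h1.ne')]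
      simp

lemma et_final {n : ℕ} (i : Fin (n+1)) (w : Fin (n+2) → Fin (n+1)) :
    itR (c0 i) (Fin.last _) w =
      if w (Fin.last _) = i then qh * om (w ∘ Fin.castSucc) else 0 := by
  have key : ∀ (j : Fin (n+1)) (f : Fin (n+1) → Fin (n+1)),
      itR (c0 i) (Fin.last _) (Fin.snoc f j : Fin (n+2) → Fin (n+1)) =
      om f * itR (c0 i) (Fin.last _) (Fin.snoc id j : Fin (n+2) → Fin (n+1)) := by
    intro j f
    have hsn : ∀ (f : Fin (n+1) → Fin (n+1)) (k : Fin n),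
        (Fin.snoc (f ∘ sw k) j : Fin (n+2) → Fin (n+1)) =
        (Fin.snoc f j : Fin (n+2) → Fin (n+1)) ∘ sw k.castSucc := by
      intro f k
      funext a
      induction a using Fin.lastCases with
      | last =>
        simp only [Fin.snoc_last, Function.comp, sw]
        rw [Equiv.swap_apply_of_ne_of_ne, Fin.snoc_last]
        · simp [Fin.ext_iff]; omega
        · simp [Fin.ext_iff]; omega
      | cast a =>
        have := congrFun (comp_sw_castSucc (Fin.snoc f j : Fin (n+2) → Fin (n+1)) k) a
        simp only [Function.comp_apply, Fin.snoc_castSucc] at this ⊢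
        exact this.symm
    have han : ∀ k : Fin n, RR k.castSucc (itR (c0 i) (Fin.last _)) =
        (-qhi) • itR (c0 i) (Fin.last (n+1)) := fun k =>
      itR_anti (c0 i) (c0_anti i) (n+1) (Fin.last _) rfl k.castSucc (Or.inl (by simp))
    refine antisymm_unique (fun f => itR (c0 i) (Fin.last _) (Fin.snoc f j : Fin (n+2) → Fin (n+1))) ?_ ?_ f
    · intro f k h
      apply (RR_antisymm _ _ (han k) _).1
      rw [Fin.succ_castSucc, Fin.snoc_castSucc, Fin.snoc_castSucc, h]
    · intro f k h
      simp only [hsn]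
      apply (RR_antisymm _ _ (han k) _).2
      rw [Fin.succ_castSucc, Fin.snoc_castSucc, Fin.snoc_castSucc]
      exact h
  have hw : w = Fin.snoc (w ∘ Fin.castSucc) (w (Fin.last _)) := by
    funext a
    induction a using Fin.lastCases <;> simp
  have := key (w (Fin.last _)) (w ∘ Fin.castSucc)
  rw [← hw] at this
  rw [this]
  split_ifs with h
  · rw [h, et_eq i _ _ (by simp)]
    rw [Finset.prod_eq_single i.castSucc]
    · have : (Fin.snoc id i : Fin (n+2) → Fin (n+1)) ∘ (Fin.last _).succAbove = id := by
        funext a; simp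
      rw [this, om_id]
      simp [mul_comm]
    · intro b hb hbi
      rw [Finset.mem_Iio] at hb
      obtain ⟨b, rfl⟩ := Fin.exists_castSucc_eq.mpr hb.ne
      rw [Fin.snoc_castSucc, if_neg]
      rintro rfl
      exact hbi rfl
    · intro hh
      exact absurd (Finset.mem_Iio.mpr (Fin.castSucc_lt_last i)) hh
  · rw [et_twice i, mul_zero]
    refine ⟨(w (Fin.last _)).castSucc, Fin.last _, (Fin.castSucc_lt_last _).ne, by simp, by simpa using h⟩

lemma Xr1 {m : ℕ} (i k l : Fin m) (h : k < l) : Xg i l * Xg i k = qh • (Xg i k * Xg i l) := by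
  have := RingQuot.mkAlgHom_rel A (QRel.r1 i k l h)
  simpa [Xg, Algebra.smul_def] using this

lemma Xr2 {m : ℕ} (i j k : Fin m) (h : i < j) : Xg j k * Xg i k = qh • (Xg i k * Xg j k) := by
  have := RingQuot.mkAlgHom_rel A (QRel.r2 i j k h)
  simpa [Xg, Algebra.smul_def] using this

lemma Xr3 {m : ℕ} (i j k l : Fin m) (h : i < j) (h' : k < l) :
    Xg j k * Xg i l = Xg i l * Xg j k := by
  have := RingQuot.mkAlgHom_rel A (QRel.r3 i j k l h h')
  simpa [Xg, Algebra.smul_def] using this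

lemma Xr4 {m : ℕ} (i j k l : Fin m) (h : i < j) (h' : k < l) :
    Xg j l * Xg i k = Xg i k * Xg j l + (qh - qhi) • (Xg i l * Xg j k) := by
  have := RingQuot.mkAlgHom_rel A (QRel.r4 i j k l h h')
  simpa only [Xg, Algebra.smul_def, map_mul, map_add, AlgHom.commutes] using this

lemma th_lt {m : ℕ} {a b : Fin m} (h : a < b) : th a b = 0 := by
  rw [th, if_neg h.not_gt, if_neg h.ne]
lemma th_gt {m : ℕ} {a b : Fin m} (h : b < a) : th a b = qh - qhi := by
  rw [th, if_pos h]
lemma th_self {m : ℕ} (a : Fin m) : th a a = qh - 1 := by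
  rw [th, if_neg (lt_irrefl a), if_pos rfl]

lemma pair_rel {m : ℕ} (a b c d : Fin m) :
    Xg b c * Xg a d + th a b • (Xg a c * Xg b d) =
      Xg a d * Xg b c + th c d • (Xg a c * Xg b d) := by
  have hq : (qh - qhi) * qh = qh * qh - 1 := by linear_combination - qh_mul_qhi
  rcases lt_trichotomy a b with h | rfl | h <;> rcases lt_trichotomy c d with h' | rfl | h'
  · rw [th_lt h, th_lt h', Xr3 a b c d h h']
  · rw [th_lt h, th_self, Xr2 a b c h]; module
  · rw [th_lt h, th_gt h', Xr4 a b d c h h']; module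
  · rw [th_self, th_lt h', Xr1 a c d h']; module
  · rw [th_self, th_self]
  · rw [th_self, th_gt h', Xr1 a d c h', smul_smul, smul_smul, hq, sub_mul, one_mul]; module
  · rw [th_gt h, th_lt h', Xr4 b a c d h h', Xr3 b a c d h h']; module
  · rw [th_gt h, th_self, Xr2 b a c h, smul_smul, smul_smul, hq, sub_mul, one_mul]; module
  · rw [th_gt h, th_gt h', Xr3 b a d c h h']

/-- monomials -/
def Xw {n m : ℕ} (w f : Fin n → Fin m) : Qmb m := (List.ofFn fun k => Xg (w k) (f k)).prod

lemma prod_split {B : Type*} [Monoid B] {n : ℕ} (y : Fin (n+1) → B) (k : Fin n) :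
    ∃ P S : B, ∀ y' : Fin (n+1) → B, (∀ a, a ≠ k.castSucc → a ≠ k.succ → y' a = y a) →
      (List.ofFn y').prod = P * (y' k.castSucc * y' k.succ) * S := by
  induction n with
  | zero => exact k.elim0
  | succ n ih =>
    induction k using Fin.cases with
    | zero =>
      refine ⟨1, (List.ofFn fun a : Fin n => y a.succ.succ).prod, ?_⟩
      intro y' h
      have : (fun a : Fin n => y' a.succ.succ) = fun a : Fin n => y a.succ.succ := by
        funext a
        apply h <;> simp [Fin.ext_iff]
      simp only [List.ofFn_succ, List.prod_cons, ← this]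
      simp [mul_assoc]
    | succ k =>
      obtain ⟨P, S, h⟩ := ih (fun a => y a.succ) k
      refine ⟨y 0 * P, S, ?_⟩
      intro y' h'
      rw [List.ofFn_succ, List.prod_cons, h (fun a => y' a.succ), h' 0]
      · simp [mul_assoc]
      · simp [Fin.ext_iff]
      · simp [Fin.ext_iff]
      · intro a h1 h2
        apply h'
        · simp only [ne_eq, Fin.ext_iff, Fin.val_succ, Fin.val_castSucc] at h1 ⊢; omega
        · simp only [ne_eq, Fin.ext_iff, Fin.val_succ] at h2 ⊢; omega

lemma Xw_rel {n m : ℕ} (w f : Fin (n+1) → Fin m) (k : Fin n) :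
    Xw (w ∘ sw k) f + th (w k.castSucc) (w k.succ) • Xw w f =
      Xw w (f ∘ sw k) + th (f k.castSucc) (f k.succ) • Xw w f := by
  obtain ⟨P, S, h⟩ := prod_split (fun a => Xg (w a) (f a)) k
  have hs : ∀ a, a ≠ k.castSucc → a ≠ k.succ → sw k a = a := fun a h1 h2 =>
    Equiv.swap_apply_of_ne_of_ne h1 h2
  unfold Xw
  rw [h (fun a => Xg (w a) (f a)) (fun _ _ _ => rfl),
    h (fun a => Xg ((w ∘ sw k) a) (f a)) (fun a h1 h2 => by simp only [Function.comp, hs a h1 h2]),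
    h (fun a => Xg (w a) ((f ∘ sw k) a)) (fun a h1 h2 => by simp only [Function.comp, hs a h1 h2])]
  simp only [Function.comp, sw, Equiv.swap_apply_left, Equiv.swap_apply_right]
  have := pair_rel (w k.castSucc) (w k.succ) (f k.castSucc) (f k.succ)
  have := congrArg (fun t => P * t * S) this
  simpa only [mul_add, add_mul, mul_smul_comm, smul_mul_assoc] using this

/-- pairing of a covector with the monomials -/
def pr {n m : ℕ} (c : (Fin n → Fin m) → A) (g : Fin n → Fin m) : Qmb m :=
  ∑ w, c w • Xw w g

lemma pr_RR {n m : ℕ} (c : (Fin (n+1) → Fin m) → A) (k : Fin n) : pr (RR k c) = RR k (pr c) := by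
  funext g
  have hinv : Function.Involutive (fun w : Fin (n+1) → Fin m => w ∘ sw k) :=
    fun w => comp_sw_sw w k
  have e : ∑ w : Fin (n+1) → Fin m, c (w ∘ sw k) • Xw w g = ∑ w, c w • Xw (w ∘ sw k) g := by
    refine Fintype.sum_equiv hinv.toPerm _ _ ?_
    intro w
    simp only [Function.Involutive.coe_toPerm, comp_sw_sw]
  simp only [pr, RR, add_smul, Finset.sum_add_distrib, Finset.smul_sum, e]
  rw [← Finset.sum_add_distrib, ← Finset.sum_add_distrib]
  apply Finset.sum_congr rfl
  intro w _
  have := congrArg (fun t => c w • t) (Xw_rel w g k)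
  simp only [smul_add, smul_smul, smul_eq_mul] at this ⊢
  rw [mul_comm (th _ _), mul_comm (th (g _) _)]
  exact this

lemma pr_itR {n m : ℕ} (c : (Fin (n+1) → Fin m) → A) (p : Fin (n+1)) :
    pr (itR c p) = itR (pr c) p := by
  induction p using Fin.induction with
  | zero => rfl
  | succ k ih => rw [itR_succ, pr_RR, ih, itR_succ]

lemma pr_om {n : ℕ} (f : Fin (n+1) → Fin (n+1)) :
    pr (om (n := n+1) (m := n+1)) f = om f • pr om id := by
  refine antisymm_unique (pr om) ?_ ?_ f
  · intro f k h
    have hf : f ∘ sw k = f := by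
      funext a
      simp only [Function.comp, sw, Equiv.swap_apply_def]
      split_ifs <;> simp_all
    have key : ∀ w : Fin (n+1) → Fin (n+1), w k.castSucc < w k.succ →
        om w • Xw w f + om (w ∘ sw k) • Xw (w ∘ sw k) f = 0 := by
      intro w hw
      have := Xw_rel w f k
      rw [hf, h, th_self, th_lt hw, zero_smul, add_zero] at this
      rw [this, om_sw w k hw]
      have e : Xw w f + (qh - 1) • Xw w f = qh • Xw w f := by module
      rw [e, smul_smul, ← add_smul]
      have : om w + -qhi * om w * qh = 0 := by linear_combination (-om w) * qh_mul_qhi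
      rw [this, zero_smul]
    unfold pr
    refine Finset.sum_involution (fun w _ => w ∘ sw k) ?_ ?_ (by simp) ?_
    · intro w _
      rcases lt_trichotomy (w k.castSucc) (w k.succ) with hw | hw | hw
      · exact key w hw
      · rw [om_eq w k hw, om_eq (w ∘ sw k) k (by simp [hw])]; simp
      · have := key (w ∘ sw k) (by simpa using hw)
        rw [comp_sw_sw] at this
        exact (add_comm _ _).trans this
    · intro w _ hw he
      apply hw
      rw [om_eq w k, zero_smul]
      have := congrFun he k.succ
      simpa using this
    · intro w _
      exact comp_sw_sw w k
  · intro f k h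
    have h1 : RR k (om (n := n+1) (m := n+1)) = (-qhi) • om := by
      funext w
      exact om_RR k w
    have h2 := congrFun (pr_RR (om (n := n+1) (m := n+1)) k) f
    rw [h1] at h2
    simp only [RR, th_lt h, zero_smul, add_zero] at h2
    rw [← h2]
    simp only [pr, Pi.smul_apply, Finset.smul_sum, smul_assoc]

lemma qdet_eq {n : ℕ} : qdet (n+1) = pr (om (n := n+1) (m := n+1)) id := by
  unfold qdet pr
  symm
  rw [← Finset.sum_subset (Finset.subset_univ
    (Finset.univ.map ⟨fun v : Equiv.Perm (Fin (n+1)) => (v : Fin (n+1) → Fin (n+1)),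
      DFunLike.coe_injective⟩))]
  · rw [Finset.sum_map]
    apply Finset.sum_congr rfl
    intro v _
    simp only [Function.Embedding.coeFn_mk]
    rw [om, if_pos v.injective, len_eq_invs]
    rfl
  · intro w _ hw
    rw [om, if_neg, zero_smul]
    intro hi
    apply hw
    simp only [Finset.mem_map, Finset.mem_univ, true_and, Function.Embedding.coeFn_mk]
    exact ⟨Equiv.ofBijective w (Finite.injective_iff_bijective.mp hi), rfl⟩

lemma pr_c0 {n : ℕ} (i : Fin (n+1)) (g : Fin (n+2) → Fin (n+1)) :
    pr (c0 i) g = Xg i (g 0) * pr om (g ∘ Fin.succ) := by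
  unfold pr
  rw [← (Fin.consEquiv (fun _ : Fin (n+2) => Fin (n+1))).sum_comp, Fintype.sum_prod_type,
    Finset.sum_eq_single i, Finset.mul_sum]
  · apply Finset.sum_congr rfl
    intro w _
    have : (Fin.cons i w : Fin (n+2) → Fin (n+1)) ∘ Fin.succ = w := by funext a; simp
    simp only [Fin.consEquiv_apply, c0, Fin.cons_zero, if_true, this, mul_smul_comm, Xw,
      List.ofFn_succ (n := n+1), List.prod_cons, Fin.cons_succ, Function.comp]
    exact congrArg (fun t => om t • _) this
  · intro b _ hb
    apply Finset.sum_eq_zero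
    intro w _
    simp [c0, hb]
  · simp

lemma pr_last {n : ℕ} (i : Fin (n+1)) (g : Fin (n+2) → Fin (n+1)) :
    pr (itR (c0 i) (Fin.last _)) g = qh • (pr om (g ∘ Fin.castSucc) * Xg i (g (Fin.last _))) := by
  unfold pr
  rw [← (Fin.snocEquiv (fun _ : Fin (n+2) => Fin (n+1))).sum_comp, Fintype.sum_prod_type,
    Finset.sum_eq_single i, Finset.sum_mul, Finset.smul_sum]
  · apply Finset.sum_congr rfl
    intro w _
    have : (Fin.snoc w i : Fin (n+2) → Fin (n+1)) ∘ Fin.castSucc = w := by funext a; simp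
    simp only [Fin.snocEquiv_apply, et_final, Fin.snoc_last, if_true, this, smul_mul_assoc, Xw,
      List.ofFn_succ' (n := n+1), List.prod_concat, Fin.snoc_castSucc, Function.comp, smul_smul]
    exact congrArg (fun t => (qh * om t) • _) this
  · intro b _ hb
    apply Finset.sum_eq_zero
    intro w _
    simp [et_final, hb]
  · simp

lemma itR_sum {n m : ℕ} {M ι : Type*} [AddCommGroup M] [Module A M] [Fintype ι]
    (c : ι → (Fin (n+1) → Fin m) → A) (v : ι → M) (p : Fin (n+1)) :
    itR (fun w => ∑ j, c j w • v j) p = fun w => ∑ j, itR (c j) p w • v j := by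
  induction p using Fin.induction with
  | zero => rfl
  | succ k ih =>
    rw [itR_succ, ih]
    funext w
    simp only [itR_succ, RR, Finset.smul_sum, ← Finset.sum_add_distrib, add_smul, smul_smul,
      smul_eq_mul]

lemma qdet_central_succ {n : ℕ} (i j : Fin (n+1)) :
    qdet (n+1) * Xg i j = Xg i j * qdet (n+1) := by
  have h0 : pr (c0 i) = fun w => ∑ j, c0 j w • (Xg i j * qdet (n+1)) := by
    funext g
    rw [pr_c0, pr_om, ← qdet_eq, Finset.sum_eq_single (g 0)]
    · rw [c0, if_pos rfl, mul_smul_comm]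
    · intro b _ hb
      rw [c0, if_neg hb.symm, zero_smul]
    · simp
  have h1 := congrFun (pr_itR (c0 i) (Fin.last _)) (Fin.snoc id j)
  have e : (Fin.snoc id j : Fin (n+2) → Fin (n+1)) ∘ Fin.castSucc = id := by funext a; simp
  rw [pr_last, h0, itR_sum, e, ← qdet_eq] at h1
  simp only [Fin.snoc_last, et_final, e, om_id] at h1
  rw [Finset.sum_eq_single j] at h1
  · rw [if_pos rfl, mul_one] at h1
    have := congrArg (fun t => qhi • t) h1
    simpa only [smul_smul, mul_comm qhi qh, qh_mul_qhi, one_smul] using this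
  · intro b _ hb
    rw [if_neg hb.symm, zero_smul]
  · simp

/-- The quantum determinant is a central element of the quantum matrix bialgebra:
it commutes with every generator `x_{i,j}`. -/
theorem qdet_central {m : ℕ} (i j : Fin m) :
    qdet m * Xg i j = Xg i j * qdet m := by
  cases m with
  | zero => exact i.elim0
  | succ n => exact qdet_central_succ i j
end
end

section
/- Let G be the wiring diagram of s_{i_1} ⋯ s_{i_m}, and write (1 + T_{s_{i_1}}) ⋯ (1 + T_{s_{i_m}}) = Σ_{w ∈ S_n} a_w T_w in the Hecke algebra H_n(q). Then a_w = Σ_π q^{dfct(π)}, where the sum is over all path families π of type w covering G, and dfct(π) is the number of defects of π: indices j such that the two paths meeting at the central vertex of the j-th elementary diagram have previously crossed an odd number of times. -/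
noncomputable section

attribute [local instance] Classical.propDecidable

inductive HRel (n : ℕ) : FreeAlgebra A (Fin n) → FreeAlgebra A (Fin n) → Prop
  | quad (i : Fin n) : HRel n (FreeAlgebra.ι A i * FreeAlgebra.ι A i)
      (algebraMap A _ (qq - 1) * FreeAlgebra.ι A i + algebraMap A _ qq)
  | braid (i j : Fin n) (h : (i : ℕ) + 1 = j ∨ (j : ℕ) + 1 = i) :
      HRel n (FreeAlgebra.ι A i * FreeAlgebra.ι A j * FreeAlgebra.ι A i)
        (FreeAlgebra.ι A j * FreeAlgebra.ι A i * FreeAlgebra.ι A j)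
  | comm (i j : Fin n) (h : (i : ℕ) + 1 < j ∨ (j : ℕ) + 1 < i) :
      HRel n (FreeAlgebra.ι A i * FreeAlgebra.ι A j) (FreeAlgebra.ι A j * FreeAlgebra.ι A i)

/-- The type `A` Hecke algebra `H_{n+1}(q)` (of the symmetric group `S_{n+1}`). -/
abbrev Hecke (n : ℕ) := RingQuot (HRel n)

/-- The generator `T_{s_i}`. -/
def Ts {n : ℕ} (i : Fin n) : Hecke n :=
  RingQuot.mkAlgHom A (HRel n) (FreeAlgebra.ι A i)

/-- `T_w`, defined via a choice of reduced word for `w`. -/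
def Tw {n : ℕ} (w : Equiv.Perm (Fin (n + 1))) : Hecke n :=
  if h : ∃ l : List (Fin n), IsRedWord l w then (h.choose.map Ts).prod else 0

/-- A (bijective) path family covering the wiring diagram of the word `l`,
encoded by the sequence of level assignments `P t : source → level`:
`P 0 = 1`, and at the `j`-th central vertex the two incident wires either cross
or do not cross. Its type is `(P last)⁻¹`, sending each source to its sink. -/
def PathFam {n : ℕ} (l : List (Fin n))
    (P : Fin (l.length + 1) → Equiv.Perm (Fin (n + 1))) : Prop :=
  P 0 = 1 ∧ ∀ j : Fin l.length,
    P j.succ = adjT (l.get j) * P j.castSucc ∨ P j.succ = P j.castSucc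

/-- The type of a covering path family: source `i` is joined to sink `(P last)⁻¹ i`. -/
def famType {n : ℕ} (l : List (Fin n))
    (P : Fin (l.length + 1) → Equiv.Perm (Fin (n + 1))) : Equiv.Perm (Fin (n + 1)) :=
  (P (Fin.last l.length))⁻¹

/-- Whether the `j`-th central vertex is a crossing of the family `P`. -/
def crossAt {n : ℕ} (l : List (Fin n))
    (P : Fin (l.length + 1) → Equiv.Perm (Fin (n + 1))) (j : Fin l.length) : Prop :=
  P j.succ ≠ P j.castSucc

/-- The (source indices of the) two paths meeting at the `j`-th central vertex. -/
def pathsAt {n : ℕ} (l : List (Fin n))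
    (P : Fin (l.length + 1) → Equiv.Perm (Fin (n + 1))) (j : Fin l.length) :
    Fin (n + 1) × Fin (n + 1) :=
  ((P j.castSucc)⁻¹ (l.get j).castSucc, (P j.castSucc)⁻¹ (l.get j).succ)

/-- Equality of unordered pairs. -/
def samePair {n : ℕ} (p q : Fin (n + 1) × Fin (n + 1)) : Prop :=
  p = q ∨ p = (q.2, q.1)

/-- The number of defects of `P`: indices `j` such that the two paths meeting at
the `j`-th central vertex have previously crossed an odd number of times. -/
def dfct {n : ℕ} (l : List (Fin n))
    (P : Fin (l.length + 1) → Equiv.Perm (Fin (n + 1))) : ℕ :=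
  (Finset.univ.filter fun j : Fin l.length =>
    Odd (Finset.univ.filter fun k : Fin l.length =>
      k < j ∧ crossAt l P k ∧ samePair (pathsAt l P k) (pathsAt l P j)).card).card

namespace DefectProof

theorem adjT_val {n : ℕ} (i : Fin n) (x : Fin (n + 1)) :
    ((adjT i x : Fin (n + 1)) : ℕ) =
      if (x : ℕ) = i then (i : ℕ) + 1 else if (x : ℕ) = i + 1 then (i : ℕ) else x := by
  unfold adjT
  rw [Equiv.swap_apply_def]
  simp only [Fin.ext_iff, Fin.val_castSucc, Fin.val_succ]
  split_ifs <;> simp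

theorem adjT_mul_self {n : ℕ} (i : Fin n) : adjT i * adjT i = 1 := by
  unfold adjT; exact Equiv.swap_mul_self _ _

theorem adjT_inv {n : ℕ} (i : Fin n) : (adjT i)⁻¹ = adjT i := by
  unfold adjT; exact Equiv.swap_inv _ _

theorem adjT_castSucc {n : ℕ} (i : Fin n) : adjT i i.castSucc = i.succ := by
  unfold adjT; exact Equiv.swap_apply_left _ _

theorem adjT_succ {n : ℕ} (i : Fin n) : adjT i i.succ = i.castSucc := by
  unfold adjT; exact Equiv.swap_apply_right _ _

theorem adjT_ne_one {n : ℕ} (i : Fin n) : adjT i ≠ 1 := by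
  intro h
  have := adjT_val i i.castSucc
  rw [h] at this
  simp at this

/-- `w` has a descent at `i`. -/
def Desc {n : ℕ} (w : Equiv.Perm (Fin (n + 1))) (i : Fin n) : Prop :=
  w i.succ < w i.castSucc

theorem desc_mul_adjT {n : ℕ} (w : Equiv.Perm (Fin (n + 1))) (i : Fin n) :
    Desc (w * adjT i) i ↔ ¬ Desc w i := by
  unfold Desc
  rw [Equiv.Perm.mul_apply, Equiv.Perm.mul_apply, adjT_castSucc, adjT_succ, not_lt]
  constructor
  · exact le_of_lt
  · intro h
    refine lt_of_le_of_ne h fun h' => ?_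
    have := congrArg Fin.val (w.injective h')
    simp at this

/-- Right multiplication operator by `T_i`. -/
def R {n : ℕ} (i : Fin n) :
    (Equiv.Perm (Fin (n + 1)) → A) →ₗ[A] (Equiv.Perm (Fin (n + 1)) → A) where
  toFun f := fun w => if Desc w i then f (w * adjT i) + (qq - 1) * f w else qq * f (w * adjT i)
  map_add' f g := by
    funext w
    simp only [Pi.add_apply]
    split_ifs <;> ring
  map_smul' c f := by
    funext w
    simp only [Pi.smul_apply, smul_eq_mul, RingHom.id_apply]
    split_ifs <;> ring

theorem R_apply {n : ℕ} (i : Fin n) (f : Equiv.Perm (Fin (n + 1)) → A)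
    (w : Equiv.Perm (Fin (n + 1))) :
    R i f w = if Desc w i then f (w * adjT i) + (qq - 1) * f w else qq * f (w * adjT i) := rfl

theorem R_quad {n : ℕ} (i : Fin n) (f : Equiv.Perm (Fin (n + 1)) → A) :
    R i (R i f) = (qq - 1) • R i f + qq • f := by
  funext w
  simp only [R_apply, Pi.add_apply, Pi.smul_apply, smul_eq_mul, desc_mul_adjT, mul_assoc,
    adjT_mul_self, mul_one]
  split_ifs <;> ring

theorem R_comm {n : ℕ} (i j : Fin n) (h : (i : ℕ) + 1 < j ∨ (j : ℕ) + 1 < i)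
    (f : Equiv.Perm (Fin (n + 1)) → A) :
    R i (R j f) = R j (R i f) := by
  have e : adjT i * adjT j = adjT j * adjT i := by
    ext x
    simp only [Equiv.Perm.mul_apply, adjT_val]
    split_ifs <;> omega
  have d1 : ∀ w : Equiv.Perm (Fin (n + 1)), Desc (w * adjT i) j ↔ Desc w j := by
    intro w
    have h1 : adjT i j.castSucc = j.castSucc := by
      ext; rw [adjT_val]; simp only [Fin.val_castSucc]; split_ifs <;> omega
    have h2 : adjT i j.succ = j.succ := by
      ext; rw [adjT_val]; simp only [Fin.val_succ]; split_ifs <;> omega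
    simp only [Desc, Equiv.Perm.mul_apply, h1, h2]
  have d2 : ∀ w : Equiv.Perm (Fin (n + 1)), Desc (w * adjT j) i ↔ Desc w i := by
    intro w
    have h1 : adjT j i.castSucc = i.castSucc := by
      ext; rw [adjT_val]; simp only [Fin.val_castSucc]; split_ifs <;> omega
    have h2 : adjT j i.succ = i.succ := by
      ext; rw [adjT_val]; simp only [Fin.val_succ]; split_ifs <;> omega
    simp only [Desc, Equiv.Perm.mul_apply, h1, h2]
  funext w
  simp only [R_apply, d1, d2, mul_assoc, e]
  split_ifs <;> ring

theorem R_braid_aux {n : ℕ} (i j : Fin n) (h : (i : ℕ) + 1 = j)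
    (f : Equiv.Perm (Fin (n + 1)) → A) :
    R i (R j (R i f)) = R j (R i (R j f)) := by
  have hj : j.castSucc = i.succ := by ext; simp [h]
  have e : adjT i * (adjT j * adjT i) = adjT j * (adjT i * adjT j) := by
    have m1 : i.castSucc ≠ i.succ := by simp [Fin.ext_iff]
    have m2 : i.succ ≠ j.succ := by simp [Fin.ext_iff]; omega
    have m3 : i.castSucc ≠ j.succ := by simp [Fin.ext_iff]; omega
    have e1 := Equiv.swap_mul_swap_mul_swap m1 m3
    have e2 := Equiv.swap_mul_swap_mul_swap m2.symm m3.symm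
    unfold adjT
    rw [hj, ← mul_assoc, ← mul_assoc, e1, Equiv.swap_comm i.castSucc i.succ,
      Equiv.swap_comm i.succ j.succ, e2, Equiv.swap_comm]
  have h1 : adjT i j.succ = j.succ := by
    ext; rw [adjT_val]; simp only [Fin.val_succ]; split_ifs <;> omega
  have h2 : adjT j i.castSucc = i.castSucc := by
    ext; rw [adjT_val]; simp only [Fin.val_castSucc]; split_ifs <;> omega
  have h3 : adjT j i.succ = j.succ := by rw [← hj, adjT_castSucc]
  have h4 : adjT j j.succ = i.succ := by rw [← hj, adjT_succ]
  funext w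
  have n1 : w i.castSucc ≠ w i.succ := fun h' => by
    have := congrArg Fin.val (w.injective h'); simp at this
  have n2 : w i.succ ≠ w j.succ := fun h' => by
    have := congrArg Fin.val (w.injective h'); simp at this; omega
  have n3 : w i.castSucc ≠ w j.succ := fun h' => by
    have := congrArg Fin.val (w.injective h'); simp at this; omega
  simp only [R_apply, Desc, hj, Equiv.Perm.mul_apply, mul_assoc, e, h1, h2, h3, h4, adjT_castSucc,
    adjT_succ, adjT_mul_self, mul_one]
  rcases lt_or_gt_of_ne n1 with a1 | a1 <;> rcases lt_or_gt_of_ne n2 with a2 | a2 <;>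
    rcases lt_or_gt_of_ne n3 with a3 | a3 <;>
    first
    | (exfalso; order)
    | (simp only [a1, a2, a3, a1.not_gt, a2.not_gt, a3.not_gt, if_true, if_false]; done)
    | (simp only [a1, a2, a3, a1.not_gt, a2.not_gt, a3.not_gt, if_true, if_false]; ring)

/-- The right regular representation. -/
def rep (n : ℕ) : Hecke n →ₐ[A] (Module.End A (Equiv.Perm (Fin (n + 1)) → A))ᵐᵒᵖ :=
  RingQuot.liftAlgHom A (s := HRel n)
    ⟨FreeAlgebra.lift A (fun i => MulOpposite.op (R i)), by
      intro x y hxy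
      induction hxy with
      | quad i =>
        simp only [map_mul, map_add, FreeAlgebra.lift_ι_apply, AlgHom.commutes]
        apply MulOpposite.unop_injective
        apply LinearMap.ext
        intro f
        have := R_quad i f
        rw [← map_smul] at this
        exact this
      | braid i j h =>
        simp only [map_mul, FreeAlgebra.lift_ι_apply]
        apply MulOpposite.unop_injective
        apply LinearMap.ext
        intro f
        rcases h with h | h
        · exact R_braid_aux i j h f
        · exact (R_braid_aux j i h f).symm
      | comm i j h =>
        simp only [map_mul, FreeAlgebra.lift_ι_apply]
        apply MulOpposite.unop_injective
        apply LinearMap.ext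
        intro f
        exact (R_comm i j h f).symm⟩

theorem rep_Ts {n : ℕ} (i : Fin n) : rep n (Ts i) = MulOpposite.op (R i) := by
  unfold rep Ts
  rw [RingQuot.liftAlgHom_mkAlgHom_apply, FreeAlgebra.lift_ι_apply]

/-- Right action. -/
def act {n : ℕ} (f : Equiv.Perm (Fin (n + 1)) → A) (x : Hecke n) :
    Equiv.Perm (Fin (n + 1)) → A :=
  (rep n x).unop f

theorem act_one {n : ℕ} (f : Equiv.Perm (Fin (n + 1)) → A) : act f 1 = f := by
  simp [act]

theorem act_mul {n : ℕ} (f : Equiv.Perm (Fin (n + 1)) → A) (x y : Hecke n) :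
    act f (x * y) = act (act f x) y := by
  simp [act]

theorem act_add {n : ℕ} (f : Equiv.Perm (Fin (n + 1)) → A) (x y : Hecke n) :
    act f (x + y) = act f x + act f y := by
  simp [act]

theorem add_act {n : ℕ} (f g : Equiv.Perm (Fin (n + 1)) → A) (x : Hecke n) :
    act (f + g) x = act f x + act g x := by
  simp [act]

theorem smul_act {n : ℕ} (c : A) (f : Equiv.Perm (Fin (n + 1)) → A) (x : Hecke n) :
    act (c • f) x = c • act f x := by
  simp [act]

theorem act_sum {n : ℕ} (f : Equiv.Perm (Fin (n + 1)) → A)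
    (a : Equiv.Perm (Fin (n + 1)) → A) (x : Equiv.Perm (Fin (n + 1)) → Hecke n) :
    act f (∑ v, a v • x v) = ∑ v, a v • act f (x v) := by
  simp [act, map_sum, Finset.unop_sum]

theorem act_Ts {n : ℕ} (f : Equiv.Perm (Fin (n + 1)) → A) (i : Fin n) :
    act f (Ts i) = R i f := by
  simp [act, rep_Ts]

/-- basis vector -/
def E {n : ℕ} (u : Equiv.Perm (Fin (n + 1))) : Equiv.Perm (Fin (n + 1)) → A :=
  fun w => if w = u then 1 else 0

theorem mul_adjT_eq_iff {n : ℕ} (u w : Equiv.Perm (Fin (n + 1))) (i : Fin n) :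
    w * adjT i = u ↔ w = u * adjT i := by
  constructor
  · rintro rfl; rw [mul_assoc, adjT_mul_self, mul_one]
  · rintro rfl; rw [mul_assoc, adjT_mul_self, mul_one]

theorem ne_mul_adjT {n : ℕ} (u : Equiv.Perm (Fin (n + 1))) (i : Fin n) : u ≠ u * adjT i := by
  intro h
  exact adjT_ne_one i (by simpa using h.symm)

theorem R_E_asc {n : ℕ} (u : Equiv.Perm (Fin (n + 1))) (i : Fin n) (h : ¬ Desc u i) :
    R i (E u) = E (u * adjT i) := by
  funext w
  simp only [R_apply, E, mul_adjT_eq_iff]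
  by_cases h1 : w = u * adjT i
  · have hd : Desc w i := by rw [h1, desc_mul_adjT]; exact h
    have : w ≠ u := by rw [h1]; exact (ne_mul_adjT u i).symm
    simp [h1, hd, (ne_mul_adjT u i).symm, desc_mul_adjT, h]
  · by_cases h2 : w = u
    · subst h2; simp [h, h1]
    · simp [h1, h2]

theorem R_E_desc {n : ℕ} (u : Equiv.Perm (Fin (n + 1))) (i : Fin n) (h : Desc u i) :
    R i (E u) = qq • E (u * adjT i) + (qq - 1) • E u := by
  funext w
  simp only [R_apply, E, mul_adjT_eq_iff, Pi.add_apply, Pi.smul_apply, smul_eq_mul]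
  by_cases h1 : w = u * adjT i
  · have hd : ¬ Desc w i := by rw [h1, desc_mul_adjT]; exact not_not.2 h
    simp [h1, (ne_mul_adjT u i).symm, desc_mul_adjT, h]
  · by_cases h2 : w = u
    · subst h2; simp [h, h1]
    · simp [h1, h2]

/-- step weight -/
def wt {n : ℕ} (u : Equiv.Perm (Fin (n + 1))) (i : Fin n) : A := if Desc u i then qq else 1

theorem E_step {n : ℕ} (u : Equiv.Perm (Fin (n + 1))) (i : Fin n) :
    act (E u) (1 + Ts i) = wt u i • (E u + E (u * adjT i)) := by
  rw [act_add, act_one, act_Ts]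
  unfold wt
  split_ifs with h
  · rw [R_E_desc u i h]
    funext w
    simp only [Pi.add_apply, Pi.smul_apply, smul_eq_mul]
    ring
  · rw [R_E_asc u i h, one_smul]

/-! ### Inversions and length -/

def inv {n : ℕ} (w : Equiv.Perm (Fin (n + 1))) : ℕ :=
  (Finset.univ.filter fun p : Fin (n + 1) × Fin (n + 1) => p.1 < p.2 ∧ w p.2 < w p.1).card

theorem adjT_lt {n : ℕ} (i : Fin n) (x y : Fin (n + 1)) (h : x < y)
    (h' : ¬ (x = i.castSucc ∧ y = i.succ)) : adjT i x < adjT i y := by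
  simp only [Fin.lt_def, Fin.ext_iff, Fin.val_castSucc, Fin.val_succ, adjT_val] at *
  split_ifs <;> omega

theorem adjT_adjT {n : ℕ} (i : Fin n) (x : Fin (n + 1)) : adjT i (adjT i x) = x := by
  rw [← Equiv.Perm.mul_apply, adjT_mul_self]; rfl

theorem inv_desc {n : ℕ} (w : Equiv.Perm (Fin (n + 1))) (i : Fin n) (h : Desc w i) :
    inv (w * adjT i) + 1 = inv w := by
  unfold inv
  set S := Finset.univ.filter fun p : Fin (n + 1) × Fin (n + 1) => p.1 < p.2 ∧ w p.2 < w p.1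
    with hS
  have hmem : (i.castSucc, i.succ) ∈ S := by
    simp only [hS, Finset.mem_filter, Finset.mem_univ, true_and]
    exact ⟨by simp [Fin.lt_def], h⟩
  rw [← Finset.card_erase_add_one hmem]
  congr 1
  refine Finset.card_nbij' (fun p => (adjT i p.1, adjT i p.2)) (fun p => (adjT i p.1, adjT i p.2))
    ?_ ?_ ?_ ?_
  · rintro ⟨a, b⟩ hp
    rw [Finset.mem_coe, Finset.mem_filter] at hp
    replace hp := hp.2
    simp only [Equiv.Perm.mul_apply] at hp
    obtain ⟨h1, h2⟩ := hp
    have hne : ¬ (a = i.castSucc ∧ b = i.succ) := by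
      rintro ⟨rfl, rfl⟩
      rw [adjT_castSucc, adjT_succ] at h2
      exact absurd h (not_lt.2 h2.le)
    simp only [Finset.coe_erase, Set.mem_sdiff, Finset.mem_coe, hS, Finset.mem_filter,
      Finset.mem_univ, true_and, Set.mem_singleton_iff, Prod.mk.injEq]
    refine ⟨⟨adjT_lt i a b h1 hne, h2⟩, ?_⟩
    rintro ⟨h3, h4⟩
    have h5 := congrArg (adjT i) h3
    have h6 := congrArg (adjT i) h4
    rw [adjT_adjT, adjT_castSucc] at h5
    rw [adjT_adjT, adjT_succ] at h6
    subst h5 h6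
    simp [Fin.lt_def] at h1
  · rintro ⟨a, b⟩ hp
    simp only [Finset.coe_erase, Set.mem_sdiff, Finset.mem_coe, hS, Finset.mem_filter,
      Finset.mem_univ, true_and, Set.mem_singleton_iff, Prod.mk.injEq] at hp
    obtain ⟨⟨h1, h2⟩, h3⟩ := hp
    rw [Finset.mem_coe, Finset.mem_filter]
    refine ⟨Finset.mem_univ _, ?_⟩
    simp only [Equiv.Perm.mul_apply, adjT_adjT]
    exact ⟨adjT_lt i a b h1 h3, h2⟩
  · rintro ⟨a, b⟩ _
    simp only [adjT_adjT]
  · rintro ⟨a, b⟩ _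
    simp only [adjT_adjT]

theorem inv_asc {n : ℕ} (w : Equiv.Perm (Fin (n + 1))) (i : Fin n) (h : ¬ Desc w i) :
    inv (w * adjT i) = inv w + 1 := by
  have := inv_desc (w * adjT i) i ((desc_mul_adjT w i).2 h)
  rw [mul_assoc, adjT_mul_self, mul_one] at this
  exact this.symm

theorem inv_one {n : ℕ} : inv (1 : Equiv.Perm (Fin (n + 1))) = 0 := by
  unfold inv
  rw [Finset.card_eq_zero, Finset.filter_eq_empty_iff]
  rintro ⟨a, b⟩ _ ⟨h1, h2⟩
  exact absurd h1 (not_lt.2 (le_of_lt h2))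

theorem eq_one_of_no_desc {n : ℕ} (w : Equiv.Perm (Fin (n + 1))) (h : ∀ i, ¬ Desc w i) :
    w = 1 := by
  have hm : StrictMono w := by
    rw [Fin.strictMono_iff_lt_succ]
    intro i
    refine lt_of_le_of_ne (not_lt.1 (h i)) fun h' => ?_
    have := congrArg Fin.val (w.injective h')
    simp at this
  have : (w : Fin (n + 1) → Fin (n + 1)) = id :=
    (StrictMono.range_inj hm strictMono_id).1 (by simp [w.surjective.range_eq])
  ext x
  rw [this]; rfl

theorem wordProd_append {n : ℕ} (l : List (Fin n)) (i : Fin n) :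
    wordProd (l ++ [i]) = wordProd l * adjT i := by
  simp [wordProd]

theorem exists_word {n : ℕ} (k : ℕ) : ∀ w : Equiv.Perm (Fin (n + 1)), inv w = k →
    ∃ l : List (Fin n), wordProd l = w ∧ l.length = k := by
  induction k with
  | zero =>
    intro w hw
    refine ⟨[], ?_, rfl⟩
    rw [eq_one_of_no_desc w]
    · simp [wordProd]
    · intro i hi
      have := inv_desc w i hi
      omega
  | succ k ih =>
    intro w hw
    have : ∃ i, Desc w i := by
      by_contra! hc
      rw [eq_one_of_no_desc w hc, inv_one] at hw
      omega
    obtain ⟨i, hi⟩ := this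
    have h1 := inv_desc w i hi
    obtain ⟨l, hl, hlen⟩ := ih (w * adjT i) (by omega)
    refine ⟨l ++ [i], ?_, by simp [hlen]⟩
    rw [wordProd_append, hl, mul_assoc, adjT_mul_self, mul_one]

theorem word_lemma {n : ℕ} (l : List (Fin n)) :
    inv (wordProd l) ≤ l.length ∧
      (inv (wordProd l) = l.length → act (E 1) ((l.map Ts).prod) = E (wordProd l)) := by
  induction l using List.reverseRecOn with
  | nil => simp [wordProd, inv_one, act_one]
  | append_singleton l i ih =>
    obtain ⟨h1, h2⟩ := ih
    rw [wordProd_append, List.length_append, List.length_singleton]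
    by_cases hd : Desc (wordProd l) i
    · have := inv_desc _ i hd
      constructor
      · omega
      · intro; omega
    · rw [inv_asc _ i hd]
      refine ⟨by omega, fun h => ?_⟩
      rw [List.map_append, List.prod_append, act_mul, h2 (by omega)]
      simp only [List.map_cons, List.map_nil, List.prod_singleton]
      rw [act_Ts, R_E_asc _ i hd]

theorem lift_word {n : ℕ} (l : List (Equiv.Perm (Fin (n + 1))))
    (h : ∀ s ∈ l, ∃ p : Fin (n + 1) × Fin (n + 1), (p.1 : ℕ) + 1 = (p.2 : ℕ) ∧
      s = Equiv.swap p.1 p.2) :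
    ∃ l' : List (Fin n), l'.map adjT = l := by
  induction l with
  | nil => exact ⟨[], rfl⟩
  | cons s l ih =>
    obtain ⟨l', hl'⟩ := ih fun t ht => h t (List.mem_cons_of_mem _ ht)
    obtain ⟨⟨a, b⟩, hab, hs⟩ := h s List.mem_cons_self
    simp only at hab hs
    have hb := b.isLt
    refine ⟨⟨a, by omega⟩ :: l', ?_⟩
    rw [List.map_cons, hl', hs]
    congr 1
    unfold adjT
    congr 1
    ext; simp [hab]

theorem len_eq_inv {n : ℕ} (w : Equiv.Perm (Fin (n + 1))) : len w = inv w := by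
  obtain ⟨l, hl, hlen⟩ := exists_word (inv w) w rfl
  have hmem : inv w ∈ {k | ∃ l : List (Equiv.Perm (Fin (n + 1))), l.length = k ∧
    (∀ s ∈ l, ∃ p : Fin (n + 1) × Fin (n + 1), (p.1 : ℕ) + 1 = (p.2 : ℕ) ∧
      s = Equiv.swap p.1 p.2) ∧ l.prod = w} := by
    refine ⟨l.map adjT, by simp [hlen], ?_, hl⟩
    intro s hs
    obtain ⟨i, _, rfl⟩ := List.mem_map.1 hs
    exact ⟨(i.castSucc, i.succ), by simp, rfl⟩
  apply le_antisymm
  · exact Nat.sInf_le hmem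
  · obtain ⟨l1, h1, h2, h3⟩ := Nat.sInf_mem ⟨_, hmem⟩
    obtain ⟨l2, rfl⟩ := lift_word l1 h2
    have h4 := (word_lemma l2).1
    have h5 : wordProd l2 = w := h3
    rw [h5] at h4
    rw [List.length_map] at h1
    unfold len
    rw [← h1]
    exact h4

theorem act_Tw {n : ℕ} (w : Equiv.Perm (Fin (n + 1))) : act (E 1) (Tw w) = E w := by
  have hex : ∃ l : List (Fin n), IsRedWord l w := by
    obtain ⟨l, hl, hlen⟩ := exists_word (inv w) w rfl
    exact ⟨l, hl, by rw [hlen, len_eq_inv]⟩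
  unfold Tw
  rw [dif_pos hex]
  obtain ⟨h1, h2⟩ := hex.choose_spec
  rw [(word_lemma hex.choose).2, h1]
  rw [h1, h2, len_eq_inv]

/-! ### Path families -/

theorem path_sum {n : ℕ} (l : List (Fin n)) : ∀ (u w : Equiv.Perm (Fin (n + 1))),
    act (E u) ((l.map fun i => 1 + Ts i).prod) w =
      ∑ P : Fin (l.length + 1) → Equiv.Perm (Fin (n + 1)),
        if (P 0 = u⁻¹ ∧ ∀ j : Fin l.length,
            P j.succ = adjT (l.get j) * P j.castSucc ∨ P j.succ = P j.castSucc) ∧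
            (P (Fin.last l.length))⁻¹ = w
        then ∏ j : Fin l.length, wt (P j.castSucc)⁻¹ (l.get j) else 0 := by
  induction l with
  | nil =>
    intro u w
    rw [List.map_nil, List.prod_nil, act_one]
    refine Eq.trans ?_ ((Equiv.funUnique (Fin 1) (Equiv.Perm (Fin (n + 1)))).symm.sum_comp _)
    rw [Finset.sum_eq_single u⁻¹]
    · simp [E, eq_comm]
    · intro b _ hb
      rw [if_neg]
      rintro ⟨⟨h, _⟩, _⟩
      exact hb h
    · simp
  | cons i l ih =>
    intro u w
    rw [List.map_cons, List.prod_cons, act_mul, E_step, smul_act, add_act]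
    rw [Pi.smul_apply, Pi.add_apply, ih, ih, ← Finset.sum_add_distrib, smul_eq_mul,
      Finset.mul_sum]
    refine Eq.trans ?_
      ((Fin.consEquiv (fun _ : Fin (l.length + 2) => Equiv.Perm (Fin (n + 1)))).sum_comp _)
    rw [Fintype.sum_prod_type, Finset.sum_eq_single u⁻¹]
    · refine Finset.sum_congr rfl fun P _ => ?_
      have hne : u⁻¹ ≠ (u * adjT i)⁻¹ := fun h => ne_mul_adjT u i (inv_injective h)
      have hprod : (∏ j : Fin (i :: l).length,
          wt ((Fin.consEquiv (fun _ : Fin (l.length + 2) => Equiv.Perm (Fin (n + 1)))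
            (u⁻¹, P)) j.castSucc)⁻¹ ((i :: l).get j)) =
          wt u i * ∏ j : Fin l.length, wt (P j.castSucc)⁻¹ (l.get j) := by
        refine (Fin.prod_univ_succ _).trans ?_
        congr 1
      have hc : (((Fin.consEquiv (fun _ : Fin (l.length + 2) => Equiv.Perm (Fin (n + 1)))
            (u⁻¹, P)) 0 = u⁻¹ ∧ ∀ j : Fin (i :: l).length,
            (Fin.consEquiv (fun _ : Fin (l.length + 2) => Equiv.Perm (Fin (n + 1)))
            (u⁻¹, P)) j.succ = adjT ((i :: l).get j) * (Fin.consEquiv (fun _ : Fin (l.length + 2) => Equiv.Perm (Fin (n + 1)))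
            (u⁻¹, P)) j.castSucc ∨ (Fin.consEquiv (fun _ : Fin (l.length + 2) => Equiv.Perm (Fin (n + 1)))
            (u⁻¹, P)) j.succ = (Fin.consEquiv (fun _ : Fin (l.length + 2) => Equiv.Perm (Fin (n + 1)))
            (u⁻¹, P)) j.castSucc) ∧
            ((Fin.consEquiv (fun _ : Fin (l.length + 2) => Equiv.Perm (Fin (n + 1)))
            (u⁻¹, P)) (Fin.last (i :: l).length))⁻¹ = w) ↔
          ((P 0 = (u * adjT i)⁻¹ ∨ P 0 = u⁻¹) ∧ (∀ j : Fin l.length,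
            P j.succ = adjT (l.get j) * P j.castSucc ∨ P j.succ = P j.castSucc)) ∧
            (P (Fin.last l.length))⁻¹ = w := by
        apply and_congr
        · rw [mul_inv_rev, adjT_inv]
          refine (and_iff_right rfl).trans ?_
          exact Fin.forall_fin_succ
        · rfl
      rw [hprod]
      simp only [hc]
      by_cases h1 : P 0 = u⁻¹
      · simp [h1, adjT_ne_one i]
      · by_cases h2 : P 0 = (u * adjT i)⁻¹
        · rw [h2]; simp [adjT_ne_one i]
        · simp [h1, h2]
    · intro b _ hb
      refine Finset.sum_eq_zero fun P _ => ?_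
      rw [if_neg]
      rintro ⟨⟨h, _⟩, _⟩
      exact hb h
    · simp

theorem samePair_swap {n : ℕ} (p q : Fin (n + 1) × Fin (n + 1)) :
    samePair p (q.2, q.1) ↔ samePair p q := by
  unfold samePair
  exact or_comm

theorem adjT_lt_iff {n : ℕ} (i : Fin n) (x y : Fin (n + 1))
    (h1 : ¬ (x = i.castSucc ∧ y = i.succ)) (h2 : ¬ (y = i.castSucc ∧ x = i.succ)) :
    adjT i x < adjT i y ↔ x < y := by
  simp only [Fin.lt_def, Fin.ext_iff, Fin.val_castSucc, Fin.val_succ, adjT_val] at *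
  split_ifs <;> omega

theorem parity {n : ℕ} (l : List (Fin n))
    (P : Fin (l.length + 1) → Equiv.Perm (Fin (n + 1))) (hP : PathFam l P)
    (a b : Fin (n + 1)) (hab : a < b) (t : ℕ) : ∀ (ht : t < l.length + 1),
    (Odd (Finset.univ.filter fun k : Fin l.length =>
      (k : ℕ) < t ∧ crossAt l P k ∧ samePair (pathsAt l P k) (a, b)).card ↔
      P ⟨t, ht⟩ b < P ⟨t, ht⟩ a) := by
  induction t with
  | zero =>
    intro ht
    have : P ⟨0, ht⟩ = 1 := hP.1
    rw [this]
    simp [hab.le]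
  | succ t ih =>
    intro ht
    have ih := ih (by omega)
    set k0 : Fin l.length := ⟨t, by omega⟩ with hk0
    have hstep : P ⟨t + 1, ht⟩ = adjT (l.get k0) * P ⟨t, by omega⟩ ∨
      P ⟨t + 1, ht⟩ = P ⟨t, by omega⟩ := hP.2 k0
    have hcr : crossAt l P k0 ↔ P ⟨t + 1, ht⟩ ≠ P ⟨t, by omega⟩ := Iff.rfl
    set Q := P ⟨t, by omega⟩ with hQ
    have hpa : pathsAt l P k0 = (Q⁻¹ (l.get k0).castSucc, Q⁻¹ (l.get k0).succ) := rfl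
    set i := l.get k0
    set F := Finset.univ.filter fun k : Fin l.length =>
      (k : ℕ) < t ∧ crossAt l P k ∧ samePair (pathsAt l P k) (a, b) with hF
    have hlt : ∀ k : Fin l.length, (k : ℕ) < t + 1 ↔ (k : ℕ) < t ∨ k = k0 := by
      intro k; rw [Fin.ext_iff, hk0]; simp only; omega
    by_cases hc : crossAt l P k0 ∧ samePair (pathsAt l P k0) (a, b)
    · have hins : (Finset.univ.filter fun k : Fin l.length =>
          (k : ℕ) < t + 1 ∧ crossAt l P k ∧ samePair (pathsAt l P k) (a, b)) = insert k0 F := by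
        ext k
        simp only [hF, Finset.mem_insert, Finset.mem_filter, Finset.mem_univ, true_and, hlt]
        constructor
        · rintro ⟨h1 | h1, h2⟩
          · exact Or.inr ⟨h1, h2⟩
          · exact Or.inl h1
        · rintro (h1 | ⟨h1, h2⟩)
          · subst h1; exact ⟨Or.inr rfl, hc⟩
          · exact ⟨Or.inl h1, h2⟩
      have hnot : k0 ∉ F := by simp [hF, hk0]
      rw [hins, Finset.card_insert_of_notMem hnot, Nat.odd_add_one, ih]
      obtain ⟨hc1, hc2⟩ := hc
      have hs := hstep.resolve_right (hcr.1 hc1)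
      rw [hs, Equiv.Perm.mul_apply, Equiv.Perm.mul_apply]
      rw [hpa] at hc2
      have hlti : i.castSucc < i.succ := by simp [Fin.lt_def]
      rcases hc2 with h | h
      · obtain ⟨h1, h2⟩ := Prod.mk.inj h
        have h1 : Q a = i.castSucc := by rw [← h1]; simp
        have h2 : Q b = i.succ := by rw [← h2]; simp
        rw [h1, h2, adjT_castSucc, adjT_succ]
        simp [hlti, hlti.le]
      · obtain ⟨h1, h2⟩ := Prod.mk.inj h
        simp only at h1 h2
        have h1 : Q b = i.castSucc := by rw [← h1]; simp
        have h2 : Q a = i.succ := by rw [← h2]; simp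
        rw [h1, h2, adjT_castSucc, adjT_succ]
        simp [hlti, hlti.le]
    · have hins : (Finset.univ.filter fun k : Fin l.length =>
          (k : ℕ) < t + 1 ∧ crossAt l P k ∧ samePair (pathsAt l P k) (a, b)) = F := by
        ext k
        simp only [hF, Finset.mem_filter, Finset.mem_univ, true_and, hlt]
        constructor
        · rintro ⟨h1 | h1, h2⟩
          · exact ⟨h1, h2⟩
          · subst h1; exact absurd h2 hc
        · rintro ⟨h1, h2⟩
          exact ⟨Or.inl h1, h2⟩
      rw [hins, ih]
      by_cases hcc : crossAt l P k0
      · have hns : ¬ samePair (pathsAt l P k0) (a, b) := fun h => hc ⟨hcc, h⟩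
        have hs := hstep.resolve_right (hcr.1 hcc)
        rw [hs, Equiv.Perm.mul_apply, Equiv.Perm.mul_apply, adjT_lt_iff]
        · rintro ⟨h1, h2⟩
          apply hns; right
          rw [hpa, ← h1, ← h2]; simp
        · rintro ⟨h1, h2⟩
          apply hns; left
          rw [hpa, ← h1, ← h2]; simp
      · have : P ⟨t + 1, ht⟩ = Q := by
          by_contra h; exact hcc (hcr.2 h)
        rw [this]

theorem perm_apply_inv {n : ℕ} (w : Equiv.Perm (Fin (n + 1))) (x : Fin (n + 1)) :
    w (w⁻¹ x) = x := by simp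

theorem defect_iff {n : ℕ} (l : List (Fin n))
    (P : Fin (l.length + 1) → Equiv.Perm (Fin (n + 1))) (hP : PathFam l P) (j : Fin l.length) :
    Odd (Finset.univ.filter fun k : Fin l.length =>
      k < j ∧ crossAt l P k ∧ samePair (pathsAt l P k) (pathsAt l P j)).card ↔
    Desc (P j.castSucc)⁻¹ (l.get j) := by
  have hlti : (l.get j).castSucc < (l.get j).succ := by simp [Fin.lt_def]
  have hj : (j : ℕ) < l.length + 1 := by omega
  have hPj : P ⟨j, hj⟩ = P j.castSucc := rfl
  have hpa : pathsAt l P j =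
    ((P j.castSucc)⁻¹ (l.get j).castSucc, (P j.castSucc)⁻¹ (l.get j).succ) := rfl
  unfold Desc
  rw [hpa]
  rcases lt_trichotomy ((P j.castSucc)⁻¹ (l.get j).castSucc) ((P j.castSucc)⁻¹ (l.get j).succ)
    with h | h | h
  · have := parity l P hP _ _ h j hj
    rw [hPj] at this
    refine this.trans ?_
    rw [perm_apply_inv, perm_apply_inv]
    exact iff_of_false hlti.not_gt h.not_gt
  · exact absurd ((P j.castSucc)⁻¹.injective h) hlti.ne
  · have := parity l P hP _ _ h j hj
    rw [hPj] at this
    simp only [← samePair_swap _ ((P j.castSucc)⁻¹ (l.get j).castSucc, _)]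
    refine this.trans ?_
    rw [perm_apply_inv, perm_apply_inv]
    exact iff_of_true hlti h

theorem wt_prod {n : ℕ} (l : List (Fin n))
    (P : Fin (l.length + 1) → Equiv.Perm (Fin (n + 1))) (hP : PathFam l P) :
    ∏ j : Fin l.length, wt (P j.castSucc)⁻¹ (l.get j) = qq ^ dfct l P := by
  unfold dfct wt
  simp only [defect_iff l P hP]
  rw [Finset.prod_ite, Finset.prod_const, Finset.prod_const_one, mul_one]

end DefectProof

/-- Deodhar's defect formula: in `(1+T_{s_{i₁}})⋯(1+T_{s_{i_m}}) = Σ_w a_w T_w`,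
each coefficient is `a_w = Σ_π q^{dfct(π)}` over covering path families of type `w`. -/
theorem coeff_eq_defect_sum {n : ℕ} (l : List (Fin n))
    (a : Equiv.Perm (Fin (n + 1)) → A)
    (ha : (l.map fun i => 1 + Ts i).prod = ∑ v, a v • Tw v)
    (w : Equiv.Perm (Fin (n + 1))) :
    a w = ∑ P ∈ Finset.univ.filter
        (fun P : Fin (l.length + 1) → Equiv.Perm (Fin (n + 1)) =>
          PathFam l P ∧ famType l P = w),
      qq ^ dfct l P := by
  have h := congrArg (fun x => DefectProof.act (DefectProof.E 1) x w) ha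
  simp only [DefectProof.act_sum, DefectProof.act_Tw, DefectProof.path_sum, inv_one] at h
  rw [Finset.sum_apply, Finset.sum_eq_single w] at h
  · simp only [DefectProof.E, Pi.smul_apply, if_true, smul_eq_mul, mul_one] at h
    rw [← h, Finset.sum_filter]
    refine Finset.sum_congr rfl fun P _ => ?_
    by_cases hc : PathFam l P ∧ famType l P = w
    · rw [if_pos hc, ← DefectProof.wt_prod l P hc.1]
      exact if_pos hc
    · rw [if_neg hc]
      exact if_neg hc
  · intro v _ hv
    simp [DefectProof.E, hv.symm]
  · simp
end
end
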